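/- For every fixed integer ν ≥ 3, with A(ν, D) := 2 · ∑_{k=2}^{ν−1} ∑_{n=1}^{⌊D/2⌋} π(k, n) and V(ν, D) := A(ν, D) + ∑_{k=1}^{ν} #K_T(k, D), the limit lim_{D→∞} A(ν, D) / V(ν, D) = 1 / (1 + C_{ν−1}/2) holds, where C_{ν−1} = (1/(ν−1)) · C(2ν−2, ν−2) is the (ν−1)-th Catalan number. -/

import Mathlib

/-!
Both counts are polynomially growing functions of `N = ⌊D/2⌋`, and the limit is read off from their
terms of degree `ν - 1`.

Each count is a number of weakly decreasing tuples in a permutation-invariant finite set `S` of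
`k`-tuples. Up to the tuples with a repeated entry, this number is `#S / k!`
(`tendsto_card_antitone`), and tuples with a repeated entry lie in a lower-dimensional family
(`card_not_injective_le`), hence are negligible.

* For `∑_{n ≤ N} π(k, n)`, `S` consists of the positive `k`-tuples with sum at most `N`, so
  `#S ~ N^k / k!` and the sum is asymptotic to `N^k / k!²` (`tendsto_sum_partCount`).
* For `K_T(k, D)`, `S` consists of the integer `k`-tuples with sum zero whose positive entries sum
  to at most `N`. Splitting by the set `P` of positive places and the sum `n` of the positive
  entries gives `#S = ∑_{n ≤ N} ∑_P #(positive compositions of n on P) · #(weak compositions of n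
  on Pᶜ)` (`card_zeroSumTuples`). The inner sum is asymptotic to
  `∑_p C(k, p) C(k-2, p-1) n^(k-2) / (k-2)!`, which Vandermonde's identity evaluates to
  `C(2k-2, k-1) n^(k-2) / (k-2)!`. So `#K_T(k, D) ~ C(2k-2, k-1) N^(k-1) / ((k-1)! k!)`
  (`tendsto_card_antitone_zeroSumTuples`).

Hence only `k = ν - 1` matters in `auxCount` and only `k = ν` among the `K_T`, and the quotient of
the two leading coefficients is `C(2ν-2, ν-1) / (2ν) = C_{ν-1} / 2`.
-/

/-- `partCount ν D` is the number of integer partitions of `D` into exactly `ν`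
positive parts (with `partCount 0 D = 0` for `D ≥ 1`). -/
def partCount (ν D : ℕ) : ℕ :=
  ((Finset.univ : Finset (Fin ν → Fin (D + 1))).filter
    (fun k => (∀ i j : Fin ν, i ≤ j → (k j : ℕ) ≤ (k i : ℕ)) ∧
      (∀ i, 1 ≤ (k i : ℕ)) ∧ (∑ i, (k i : ℕ)) = D)).card

/-- `K_T(k, D)`: weakly decreasing tuples `m ∈ ℤ^k` with total sum `0`
and `ℓ¹`-norm at most `D`. -/
def KsetT (k D : ℕ) : Set (Fin k → ℤ) :=
  {m | (∀ i j : Fin k, i ≤ j → m j ≤ m i) ∧ (∑ i, m i) = 0 ∧ (∑ i, |m i|) ≤ (D : ℤ)}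

/-- `A(ν, D) = 2 ∑_{k=2}^{ν−1} ∑_{n=1}^{⌊D/2⌋} π(k, n)`: the number of auxiliary
nodes inserted by the recursive-evaluation insertion heuristic for the
torus-invariant basis. -/
def auxCount (ν D : ℕ) : ℕ :=
  2 * ∑ k ∈ Finset.Icc 2 (ν - 1), ∑ n ∈ Finset.Icc 1 (D / 2), partCount k n

/-- `V(ν, D) = A(ν, D) + ∑_{k=1}^{ν} #K_T(k, D)`: the total number of nodes of
the resulting computational graph. -/
noncomputable def totalCount (ν D : ℕ) : ℕ :=
  auxCount ν D + ∑ k ∈ Finset.Icc 1 ν, (KsetT k D).ncard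

open Filter Topology Finset

namespace AuxRatio

/-! ### Sorted tuples in a permutation-invariant set -/

section Sorting

variable {α : Type*} [LinearOrder α] {k : ℕ}

theorem card_le_factorial_mul_card_antitone (S : Finset (Fin k → α))
    (hS : ∀ f ∈ S, ∀ σ : Equiv.Perm (Fin k), f ∘ σ ∈ S) :
    #S ≤ k.factorial * #{f ∈ S | Antitone f} := by
  have hsub : S ⊆ (({f ∈ S | Antitone f} : Finset (Fin k → α)) ×ˢ
      (univ : Finset (Equiv.Perm (Fin k)))).image (fun p => p.1 ∘ p.2) := by
    intro f hf
    let τ : Equiv.Perm (Fin k) := Fin.revPerm.trans (Tuple.sort f)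
    refine mem_image.2 ⟨(f ∘ τ, τ⁻¹), ?_, ?_⟩
    · refine mem_product.2 ⟨mem_filter.2 ⟨hS f hf τ, ?_⟩, mem_univ _⟩
      intro i j hij
      exact Tuple.monotone_sort f (Fin.rev_le_rev.2 hij)
    · funext i
      simp
  refine (card_le_card hsub).trans (card_image_le.trans ?_)
  rw [card_product, card_univ, Fintype.card_perm, Fintype.card_fin, mul_comm]

theorem factorial_mul_card_strictAnti_le (S : Finset (Fin k → α))
    (hS : ∀ f ∈ S, ∀ σ : Equiv.Perm (Fin k), f ∘ σ ∈ S) :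
    k.factorial * #{f ∈ S | StrictAnti f} ≤ #S := by
  have h : #(({f ∈ S | StrictAnti f} : Finset (Fin k → α)) ×ˢ
      (univ : Finset (Equiv.Perm (Fin k)))) ≤ #S := by
    refine card_le_card_of_injOn (fun p => p.1 ∘ p.2) ?_ ?_
    · rintro ⟨f, σ⟩ hp
      simp only [coe_product, Set.mem_prod, mem_coe, mem_filter] at hp
      exact hS f hp.1.1 σ
    · rintro ⟨f, σ⟩ hf ⟨g, τ⟩ hg h
      simp only [coe_product, Set.mem_prod, mem_coe, mem_filter] at hf hg h
      have hr : Set.range f = Set.range g := by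
        have := congrArg Set.range h
        simpa [Set.range_comp] using this
      have hfg : f = g := (hf.1.2.range_inj hg.1.2).1 hr
      subst hfg
      congr 1
      ext i
      have := hf.1.2.injective (congrFun h i)
      simp [this]
  rwa [card_product, card_univ, Fintype.card_perm, Fintype.card_fin, mul_comm] at h

/-- A permutation-invariant set has about `k!` elements per weakly decreasing tuple; the defect
is controlled by the tuples with a repeated entry. -/
theorem factorial_mul_card_antitone_le (S : Finset (Fin k → α))
    (hS : ∀ f ∈ S, ∀ σ : Equiv.Perm (Fin k), f ∘ σ ∈ S) :
    k.factorial * #{f ∈ S | Antitone f} ≤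
      #S + k.factorial * #{f ∈ S | ¬ Function.Injective f} := by
  have h : #{f ∈ S | Antitone f} ≤
      #{f ∈ S | StrictAnti f} + #{f ∈ S | ¬ Function.Injective f} := by
    classical
    refine le_trans (card_le_card ?_) (card_union_le _ _)
    intro f hf
    rw [mem_filter] at hf
    rw [mem_union, mem_filter, mem_filter]
    by_cases hi : Function.Injective f
    · exact Or.inl ⟨hf.1, hf.2.strictAnti_of_injective hi⟩
    · exact Or.inr ⟨hf.1, hi⟩
  calc _ ≤ k.factorial * (#{f ∈ S | StrictAnti f} + #{f ∈ S | ¬ Function.Injective f}) :=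
        Nat.mul_le_mul_left _ h
    _ ≤ _ := by
        rw [mul_add]
        exact Nat.add_le_add_right (factorial_mul_card_strictAnti_le S hS) _

/-- If `#S N ~ s · x N` and tuples with a repeated entry are negligible against `x N`, then the
number of weakly decreasing tuples in `S N` is asymptotic to `(s / k!) · x N`. -/
theorem tendsto_card_antitone (S : ℕ → Finset (Fin k → α)) (x : ℕ → ℝ) (hx : ∀ N, 0 ≤ x N)
    (hS : ∀ N, ∀ f ∈ S N, ∀ σ : Equiv.Perm (Fin k), f ∘ σ ∈ S N) (s : ℝ)
    (h1 : Tendsto (fun N => (#(S N) : ℝ) / x N) atTop (𝓝 s))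
    (h2 : Tendsto (fun N => (#{f ∈ S N | ¬ Function.Injective f} : ℝ) / x N) atTop (𝓝 0)) :
    Tendsto (fun N => (#{f ∈ S N | Antitone f} : ℝ) / x N) atTop (𝓝 (s / k.factorial)) := by
  have hk : (0 : ℝ) < k.factorial := by exact_mod_cast k.factorial_pos
  have hl := h1.div_const (k.factorial : ℝ)
  have hu := hl.add h2
  rw [add_zero] at hu
  refine tendsto_of_tendsto_of_tendsto_of_le_of_le hl hu ?_ ?_
  · intro N
    have := card_le_factorial_mul_card_antitone (S N) (hS N)
    have h : (#(S N) : ℝ) ≤ k.factorial * #{f ∈ S N | Antitone f} := by exact_mod_cast this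
    show (#(S N) : ℝ) / x N / k.factorial ≤ _
    rw [div_right_comm]
    refine div_le_div_of_nonneg_right ?_ (hx N)
    rw [div_le_iff₀ hk]
    linarith
  · intro N
    have := factorial_mul_card_antitone_le (S N) (hS N)
    have h : (k.factorial : ℝ) * #{f ∈ S N | Antitone f} ≤
      #(S N) + k.factorial * #{f ∈ S N | ¬ Function.Injective f} := by exact_mod_cast this
    show _ ≤ (#(S N) : ℝ) / x N / k.factorial + _
    rw [div_right_comm, ← add_div]
    refine div_le_div_of_nonneg_right ?_ (hx N)
    rw [div_add' _ _ _ hk.ne', le_div_iff₀ hk]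
    linarith

end Sorting

/-- If a tuple of `S` with equal entries at `i` and `j` is determined by its coordinates outside a
set `E i j` of `e` places, then at most `k² · #B ^ (k - e)` tuples have a repeated entry, where `B`
contains all entries. -/
theorem card_not_injective_le {α : Type*} {k : ℕ} [DecidableEq α]
    (S : Finset (Fin k → α)) (B : Finset α)
    (hB : ∀ f ∈ S, ∀ i, f i ∈ B) (e : ℕ) (E : Fin k → Fin k → Finset (Fin k))
    (hE : ∀ i j, i ≠ j → #(E i j) = e)
    (hdet : ∀ i j, i ≠ j → ∀ f ∈ S, ∀ g ∈ S, f i = f j → g i = g j →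
      (∀ l, l ∉ E i j → f l = g l) → f = g) :
    #{f ∈ S | ¬ Function.Injective f} ≤ k ^ 2 * #B ^ (k - e) := by
  classical
  have hsub : ({f ∈ S | ¬ Function.Injective f} : Finset (Fin k → α)) ⊆
      ({p : Fin k × Fin k | p.1 ≠ p.2} : Finset (Fin k × Fin k)).biUnion
        (fun p => {f ∈ S | f p.1 = f p.2}) := by
    intro f hf
    rw [mem_filter] at hf
    obtain ⟨hfS, hf⟩ := hf
    simp only [Function.Injective, not_forall] at hf
    obtain ⟨i, j, hij, hne⟩ := hf
    exact mem_biUnion.2 ⟨(i, j), by simpa using hne, mem_filter.2 ⟨hfS, hij⟩⟩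
  have hcard : #({p : Fin k × Fin k | p.1 ≠ p.2} : Finset (Fin k × Fin k)) ≤ k ^ 2 := by
    refine (card_le_univ _).trans ?_
    simp [sq]
  refine (card_le_card hsub).trans (le_trans (card_biUnion_le_card_mul _ _ (#B ^ (k - e)) ?_)
    (Nat.mul_le_mul_right _ hcard))
  rintro ⟨i, j⟩ hp
  have hij : i ≠ j := by simpa using hp
  have hc : #(Fintype.piFinset (fun _ : {l // l ∉ E i j} => B)) = #B ^ (k - e) := by
    rw [Fintype.card_piFinset, prod_const, card_univ, Fintype.card_subtype_compl, Fintype.card_fin]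
    simp [hE i j hij]
  rw [← hc]
  refine card_le_card_of_injOn (fun f l => f l.1) ?_ ?_
  · intro f hf
    rw [mem_coe, mem_filter] at hf
    simp only [mem_coe, Fintype.mem_piFinset]
    exact fun l => hB f hf.1 _
  · intro f hf g hg h
    rw [mem_coe, mem_filter] at hf hg
    exact hdet i j hij f hf.1 g hg.1 hf.2 hg.2 (fun l hl => congrFun h ⟨l, hl⟩)

/-! ### Asymptotics of power-like sequences and their sums -/

theorem tendsto_choose_div_pow (p : ℕ) :
    Tendsto (fun n : ℕ => (n.choose p : ℝ) / (n : ℝ) ^ p) atTop (𝓝 (1 / p.factorial)) := by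
  have h := (isEquivalent_choose p).div
    (Asymptotics.IsEquivalent.refl (u := fun n : ℕ => (n : ℝ) ^ p) (l := atTop))
  refine (h.symm.tendsto_nhds (tendsto_const_nhds.congr' ?_))
  filter_upwards [eventually_gt_atTop 0] with n hn
  have : (n : ℝ) ^ p ≠ 0 := by positivity
  simp only [Pi.div_apply]
  field_simp

theorem tendsto_shift_ratio (j p : ℕ) :
    Tendsto (fun n : ℕ => (((n + j : ℕ) : ℝ) / (n : ℝ)) ^ p) atTop (𝓝 1) := by
  have h : Tendsto (fun n : ℕ => (((n + j : ℕ) : ℝ) / (n : ℝ))) atTop (𝓝 1) := by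
    have h0 := (tendsto_const_div_atTop_nhds_zero_nat (j : ℝ)).const_add 1
    rw [add_zero] at h0
    refine h0.congr' ?_
    filter_upwards [eventually_gt_atTop 0] with n hn
    have : (n : ℝ) ≠ 0 := by positivity
    push_cast
    field_simp
  simpa using h.pow p

theorem tendsto_shift_div_pow_iff (f : ℕ → ℝ) (c : ℝ) (p j : ℕ) :
    Tendsto (fun n : ℕ => f (n + j) / (n : ℝ) ^ p) atTop (𝓝 c) ↔
      Tendsto (fun n : ℕ => f n / (n : ℝ) ^ p) atTop (𝓝 c) := by
  rw [← tendsto_add_atTop_iff_nat (f := fun n : ℕ => f n / (n : ℝ) ^ p) j]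
  constructor
  · intro h
    have := h.div (tendsto_shift_ratio j p) one_ne_zero
    rw [div_one] at this
    refine this.congr' ?_
    filter_upwards [eventually_gt_atTop 0] with n hn
    have : (n : ℝ) ≠ 0 := by positivity
    have : ((n + j : ℕ) : ℝ) ≠ 0 := by positivity
    simp only [Pi.div_apply, div_pow]
    field_simp
  · intro h
    have := h.mul (tendsto_shift_ratio j p)
    rw [mul_one] at this
    refine this.congr' ?_
    filter_upwards [eventually_gt_atTop 0] with n hn
    have : (n : ℝ) ≠ 0 := by positivity
    have : ((n + j : ℕ) : ℝ) ≠ 0 := by positivity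
    simp only [div_pow]
    field_simp

theorem sum_range_choose_right (d N : ℕ) :
    ∑ n ∈ range N, n.choose d = N.choose (d + 1) := by
  induction N with
  | zero => simp
  | succ N ih => rw [sum_range_succ, ih, Nat.choose_succ_succ, add_comm]

/-- Summation raises the degree: if `f n ~ c n^d` then `∑_{n ≤ N} f n ~ c N^(d+1) / (d+1)`. -/
theorem tendsto_sum_div_pow (f : ℕ → ℝ) (c : ℝ) (d : ℕ)
    (h : Tendsto (fun n : ℕ => f n / (n : ℝ) ^ d) atTop (𝓝 c)) :
    Tendsto (fun N : ℕ => (∑ n ∈ range (N + 1), f n) / (N : ℝ) ^ (d + 1)) atTop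
      (𝓝 (c / (d + 1))) := by
  rw [tendsto_shift_div_pow_iff (fun N => ∑ n ∈ range N, f n)]
  -- Compare with the sequence `n.choose d`, whose partial sums are `N.choose (d + 1)`.
  have hd : (d.factorial : ℝ) ≠ 0 := by exact_mod_cast d.factorial_ne_zero
  have hfg : Tendsto (fun n : ℕ => (f n - c * d.factorial * n.choose d) / (n.choose d : ℝ))
      atTop (𝓝 0) := by
    have h1 := (h.div (tendsto_choose_div_pow d) (by positivity)).sub_const (c * d.factorial)
    have h2 : c / (1 / (d.factorial : ℝ)) - c * d.factorial = 0 := by field_simp; ring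
    rw [h2] at h1
    refine h1.congr' ?_
    filter_upwards [eventually_gt_atTop d] with n hn
    have : (n : ℝ) ≠ 0 := by have : 0 < n := by omega
                             positivity
    have : (n.choose d : ℝ) ≠ 0 := by exact_mod_cast (Nat.choose_pos hn.le).ne'
    simp only [Pi.div_apply]
    field_simp
  have hch : Tendsto (fun n : ℕ => ((n.choose (d + 1) : ℕ) : ℝ)) atTop atTop := by
    refine tendsto_natCast_atTop_atTop.comp ?_
    rw [← tendsto_add_atTop_iff_nat d]
    refine tendsto_atTop_mono (fun n => ?_) tendsto_id
    induction n with
    | zero => simp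
    | succ n ih =>
      rw [show n + 1 + d = (n + d) + 1 by ring, Nat.choose_succ_succ]
      have : 0 < (n + d).choose d := Nat.choose_pos (by omega)
      simp only [id, Nat.succ_eq_add_one] at *
      omega
  have hlo : (fun n : ℕ => f n - c * d.factorial * n.choose d) =o[atTop]
      (fun n : ℕ => (n.choose d : ℝ)) := by
    rw [Asymptotics.isLittleO_iff_tendsto']
    · exact hfg
    · filter_upwards [eventually_gt_atTop d] with n hn h0
      exact absurd h0 (by exact_mod_cast (Nat.choose_pos hn.le).ne')
  have hs : ∀ N : ℕ, ∑ n ∈ range N, (n.choose d : ℝ) = (N.choose (d + 1) : ℝ) := fun N => by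
    exact_mod_cast sum_range_choose_right d N
  have hsum := hlo.sum_range (fun n => by positivity) (by simpa only [hs] using hch)
  simp only [sum_sub_distrib, ← mul_sum, hs] at hsum
  have h3 := (hsum.tendsto_div_nhds_zero.mul (tendsto_choose_div_pow (d + 1))).add
    ((tendsto_choose_div_pow (d + 1)).const_mul (c * d.factorial))
  have h4 : 0 * (1 / ((d + 1).factorial : ℝ)) + c * d.factorial * (1 / ((d + 1).factorial : ℝ))
      = c / (d + 1) := by
    rw [Nat.factorial_succ]
    push_cast
    field_simp
    ring
  rw [h4] at h3
  refine h3.congr' ?_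
  filter_upwards [eventually_gt_atTop d] with n hn
  have : (n : ℝ) ≠ 0 := by have : 0 < n := by omega
                           positivity
  have : (n.choose (d + 1) : ℝ) ≠ 0 := by exact_mod_cast (Nat.choose_pos hn).ne'
  field_simp
  ring

theorem tendsto_div_pow_zero_of_lt {f : ℕ → ℝ} {c : ℝ} {p q : ℕ} (hpq : p < q)
    (h : Tendsto (fun n : ℕ => f n / (n : ℝ) ^ p) atTop (𝓝 c)) :
    Tendsto (fun n : ℕ => f n / (n : ℝ) ^ q) atTop (𝓝 0) := by
  obtain ⟨r, rfl⟩ := Nat.exists_eq_add_of_lt hpq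
  have h0 : Tendsto (fun n : ℕ => (1 / (n : ℝ)) ^ (r + 1)) atTop (𝓝 0) := by
    simpa using (tendsto_const_div_atTop_nhds_zero_nat (1 : ℝ)).pow (r + 1)
  have h1 := h.mul h0
  rw [mul_zero] at h1
  refine h1.congr' ?_
  filter_upwards [eventually_gt_atTop 0] with n hn
  have : (n : ℝ) ≠ 0 := by positivity
  simp only [div_pow, one_pow]
  field_simp
  ring

/-- A polynomial bound of degree `p < q` makes a sequence `o(N^q)`. -/
theorem tendsto_zero_of_le_pow (u : ℕ → ℕ) (C a p q : ℕ) (hpq : p < q)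
    (hu : ∀ N, u N ≤ C * (a * N + 1) ^ p) :
    Tendsto (fun N : ℕ => (u N : ℝ) / (N : ℝ) ^ q) atTop (𝓝 0) := by
  have h : Tendsto (fun N : ℕ => ((C : ℝ) * (a * N + 1) ^ p) / (N : ℝ) ^ p) atTop
      (𝓝 (C * (a + 0) ^ p)) := by
    have h0 := (((tendsto_const_div_atTop_nhds_zero_nat (1 : ℝ)).const_add (a : ℝ)).pow
      p).const_mul (C : ℝ)
    refine h0.congr' ?_
    filter_upwards [eventually_gt_atTop 0] with n hn
    have : (n : ℝ) ≠ 0 := by positivity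
    rw [mul_div_assoc, ← div_pow]
    congr 2
    field_simp
  refine tendsto_of_tendsto_of_tendsto_of_le_of_le tendsto_const_nhds
    (tendsto_div_pow_zero_of_lt hpq h) (fun N => by positivity) (fun N => ?_)
  refine div_le_div_of_nonneg_right ?_ (by positivity)
  have : (u N : ℝ) ≤ ((C * (a * N + 1) ^ p : ℕ) : ℝ) := Nat.cast_le.2 (hu N)
  push_cast at this
  exact this

/-! ### Compositions -/

theorem card_piAntidiag_eq {ι : Type*} [DecidableEq ι] (s : Finset ι) (n : ℕ) :
    #(piAntidiag s n) = (#s).multichoose n := by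
  induction s using Finset.cons_induction generalizing n with
  | empty =>
    cases n with
    | zero => simp
    | succ n => simp
  | cons i s hi ih =>
    rw [piAntidiag_cons, card_disjiUnion]
    simp only [card_map, ih, card_cons]
    rw [← Nat.sum_antidiagonal_swap]
    simp only [Prod.snd_swap]
    rw [Nat.sum_antidiagonal_eq_sum_range_succ_mk]
    simp only
    rw [Nat.sum_range_multichoose, Nat.multichoose_eq,
      show #s + 1 + n - 1 = n + #s by omega, Nat.choose_symm_add]

/-- Compositions of `n` with positive parts indexed by `P`. -/
def posComp {ι : Type*} [DecidableEq ι] (P : Finset ι) (n : ℕ) : Finset (ι → ℕ) :=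
  {a ∈ piAntidiag P n | ∀ i ∈ P, 1 ≤ a i}

/-- Subtracting `1` from each part turns positive compositions into weak ones. -/
theorem card_posComp {ι : Type*} [DecidableEq ι] (P : Finset ι) (n : ℕ) :
    #(posComp P (n + #P)) = (#P).multichoose n := by
  rw [← card_piAntidiag_eq]
  refine card_nbij' (fun a i => a i - 1) (fun b i => if i ∈ P then b i + 1 else 0) ?_ ?_ ?_ ?_
  · intro a ha
    simp only [posComp, coe_filter, Set.mem_ofPred_eq, mem_piAntidiag, mem_coe] at ha ⊢
    refine ⟨?_, fun i hi => ha.1.2 i (by omega)⟩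
    have : ∑ i ∈ P, ((a i - 1) + 1) = ∑ i ∈ P, a i :=
      sum_congr rfl fun i hi => Nat.sub_add_cancel (ha.2 i hi)
    rw [sum_add_distrib, sum_const, smul_eq_mul, mul_one] at this
    have h2 : ∑ i ∈ P, a i = n + #P := ha.1.1
    omega
  · intro b hb
    simp only [posComp, coe_filter, Set.mem_ofPred_eq, mem_piAntidiag, mem_coe] at hb ⊢
    refine ⟨⟨?_, fun i hi => ?_⟩, fun i hi => by simp [hi]⟩
    · rw [sum_congr rfl (fun i hi => if_pos hi), sum_add_distrib, hb.1]
      simp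
    · by_contra h
      simp [h] at hi
  · intro a ha
    simp only [posComp, coe_filter, Set.mem_ofPred_eq, mem_piAntidiag] at ha
    funext i
    by_cases hi : i ∈ P
    · have := ha.2 i hi
      simp only [hi, if_true]
      omega
    · have : a i = 0 := by
        by_contra h
        exact hi (ha.1.2 i h)
      simp [hi, this]
  · intro b hb
    simp only [mem_coe, mem_piAntidiag] at hb
    funext i
    by_cases hi : i ∈ P
    · simp [hi]
    · have : b i = 0 := by
        by_contra h
        exact hi (hb.2 i h)
      simp [hi, this]

theorem tendsto_multichoose (p : ℕ) :
    Tendsto (fun n : ℕ => ((p + 1).multichoose n : ℝ) / (n : ℝ) ^ p) atTop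
      (𝓝 (1 / p.factorial)) := by
  have h := (tendsto_shift_div_pow_iff (fun n => (n.choose p : ℝ)) _ p p).2
    (tendsto_choose_div_pow p)
  refine h.congr fun n => ?_
  rw [Nat.multichoose_eq, show p + 1 + n - 1 = n + p by omega, Nat.choose_symm_add]

theorem tendsto_card_posComp {ι : Type*} [DecidableEq ι] (P : Finset ι) (p : ℕ)
    (hP : #P = p + 1) :
    Tendsto (fun n : ℕ => (#(posComp P n) : ℝ) / (n : ℝ) ^ p) atTop
      (𝓝 (1 / p.factorial)) := by
  rw [← tendsto_shift_div_pow_iff (fun n => (#(posComp P n) : ℝ)) _ p (#P)]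
  simp only [card_posComp]
  rw [hP]
  exact tendsto_multichoose p

theorem tendsto_card_piAntidiag {ι : Type*} [DecidableEq ι] (P : Finset ι) (p : ℕ)
    (hP : #P = p + 1) :
    Tendsto (fun n : ℕ => (#(piAntidiag P n) : ℝ) / (n : ℝ) ^ p) atTop
      (𝓝 (1 / p.factorial)) := by
  simp only [card_piAntidiag_eq]
  rw [hP]
  exact tendsto_multichoose p

/-! ### Partitions into exactly `k` parts -/

/-- Tuples of `k` positive integers with sum at most `N`. -/
def posTuples (k N : ℕ) : Finset (Fin k → ℕ) :=
  (range (N + 1)).biUnion fun n => posComp univ n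

theorem mem_posTuples {k N : ℕ} {a : Fin k → ℕ} :
    a ∈ posTuples k N ↔ ∑ i, a i ≤ N ∧ ∀ i, 1 ≤ a i := by
  simp [posTuples, posComp]

theorem filter_posTuples_sum {k N n : ℕ} (hn : n ∈ range (N + 1)) :
    ({a ∈ posTuples k N | ∑ i, a i = n} : Finset (Fin k → ℕ)) = posComp univ n := by
  ext a
  simp only [mem_filter, mem_posTuples, posComp, mem_piAntidiag, mem_univ, implies_true, and_true,
    true_implies, mem_range] at *
  constructor
  · rintro ⟨⟨h1, h2⟩, h3⟩
    exact ⟨h3, h2⟩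
  · rintro ⟨h1, h2⟩
    have h3 : ∑ i, a i = n := h1
    exact ⟨⟨by omega, h2⟩, h1⟩

theorem card_posTuples (k N : ℕ) :
    #(posTuples k N) = ∑ n ∈ range (N + 1), #(posComp (univ : Finset (Fin k)) n) := by
  rw [card_eq_sum_card_fiberwise (f := fun a => ∑ i, a i) (t := range (N + 1))]
  · exact sum_congr rfl fun n hn => by rw [filter_posTuples_sum hn]
  · intro a ha
    have := (mem_posTuples.1 ha).1
    simp only [coe_range, Set.mem_Iio]
    omega

theorem card_antitone_posComp (k n : ℕ) :
    #{a ∈ posComp (univ : Finset (Fin k)) n | Antitone a} = partCount k n := by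
  symm
  unfold partCount
  refine card_bij (fun f _ i => (f i : ℕ)) ?_ ?_ ?_
  · intro f hf
    simp only [mem_filter, mem_univ, true_and] at hf
    simp only [posComp, mem_filter, mem_piAntidiag, mem_univ, implies_true, and_true, true_implies]
    exact ⟨⟨hf.2.2, hf.2.1⟩, fun i j h => hf.1 i j h⟩
  · intro f _ g _ h
    funext i
    exact Fin.ext (congrFun h i)
  · intro a ha
    simp only [posComp, mem_filter, mem_piAntidiag, mem_univ, implies_true, and_true,
      true_implies] at ha
    refine ⟨fun i => ⟨a i, ?_⟩, ?_, rfl⟩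
    · have : a i ≤ ∑ i, a i := single_le_sum (fun _ _ => Nat.zero_le _) (mem_univ i)
      have h3 : ∑ i, a i = n := ha.1.1
      omega
    · simp only [mem_filter, mem_univ, true_and]
      exact ⟨fun i j h => ha.2 h, ha.1.2, ha.1.1⟩

theorem card_antitone_posTuples (k N : ℕ) (hk : k ≠ 0) :
    #{a ∈ posTuples k N | Antitone a} = ∑ n ∈ Icc 1 N, partCount k n := by
  have h0 : partCount k 0 = 0 := by
    rw [← card_antitone_posComp, card_eq_zero, filter_eq_empty_iff]
    intro a ha
    simp only [posComp, mem_filter, mem_piAntidiag, mem_univ, implies_true, and_true,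
      true_implies] at ha
    have := ha.2 ⟨0, Nat.pos_of_ne_zero hk⟩
    have h2 : a ⟨0, Nat.pos_of_ne_zero hk⟩ ≤ ∑ i, a i :=
      single_le_sum (fun _ _ => Nat.zero_le _) (mem_univ _)
    have h3 : ∑ i, a i = 0 := ha.1
    omega
  rw [card_eq_sum_card_fiberwise (f := fun a => ∑ i, a i) (t := range (N + 1))]
  · rw [sum_congr rfl (g := fun n => partCount k n)]
    · rw [sum_range_succ', h0, add_zero, range_eq_Ico, sum_Ico_add' (fun n => partCount k n) 0 N 1]
      rfl
    · intro n hn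
      rw [filter_filter, ← card_antitone_posComp, ← filter_posTuples_sum hn, filter_filter]
      simp only [and_comm]
  · intro a ha
    have := (mem_posTuples.1 (mem_filter.1 ha).1).1
    simp only [coe_range, Set.mem_Iio]
    omega

theorem tendsto_sum_partCount (k : ℕ) (hk : k ≠ 0) :
    Tendsto (fun N : ℕ => ((∑ n ∈ Icc 1 N, partCount k n : ℕ) : ℝ) / (N : ℝ) ^ k) atTop
      (𝓝 (1 / (k.factorial : ℝ) ^ 2)) := by
  obtain ⟨p, rfl⟩ := Nat.exists_eq_succ_of_ne_zero hk
  simp only [Nat.succ_eq_add_one] at *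
  have hall : Tendsto (fun N : ℕ => (#(posTuples (p + 1) N) : ℝ) / (N : ℝ) ^ (p + 1)) atTop
      (𝓝 (1 / p.factorial / (p + 1))) := by
    simp only [card_posTuples, Nat.cast_sum]
    exact tendsto_sum_div_pow _ _ _ (tendsto_card_posComp univ p (by simp))
  have hni : Tendsto (fun N : ℕ =>
      (#{f ∈ posTuples (p + 1) N | ¬ Function.Injective f} : ℝ) / (N : ℝ) ^ (p + 1)) atTop
      (𝓝 0) := by
    refine tendsto_zero_of_le_pow _ ((p + 1) ^ 2) 1 p (p + 1) (by omega) fun N => ?_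
    have := card_not_injective_le (posTuples (p + 1) N) (range (N + 1)) ?_ 1 (fun i _ => {i})
      (fun _ _ _ => by simp) ?_
    · simpa using this
    · intro f hf i
      have h1 := (mem_posTuples.1 hf).1
      have : f i ≤ ∑ i, f i := single_le_sum (fun _ _ => Nat.zero_le _) (mem_univ i)
      rw [mem_range]
      omega
    · intro i j hij f _ g _ hf hg h
      funext l
      by_cases hl : l = i
      · subst hl
        rw [hf, hg]
        exact h j (by simpa using hij.symm)
      · exact h l (by simpa using hl)
  have hperm : ∀ N, ∀ f ∈ posTuples (p + 1) N, ∀ σ : Equiv.Perm (Fin (p + 1)),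
      f ∘ σ ∈ posTuples (p + 1) N := by
    intro N f hf σ
    rw [mem_posTuples] at hf ⊢
    refine ⟨?_, fun i => hf.2 _⟩
    simpa [Equiv.sum_comp σ f] using hf.1
  have := tendsto_card_antitone (posTuples (p + 1)) (fun N => (N : ℝ) ^ (p + 1))
    (fun N => by positivity) hperm _ hall hni
  simp only [card_antitone_posTuples _ _ hk] at this
  convert this using 2
  rw [Nat.factorial_succ]
  push_cast
  field_simp

/-! ### Integer tuples with sum zero -/

/-- Integer tuples of length `k` with sum zero whose positive entries sum to at most `N`
(equivalently, of `ℓ¹`-norm at most `2 * N`). The box only serves to make the set finite. -/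
noncomputable def zeroSumTuples (k N : ℕ) : Finset (Fin k → ℤ) :=
  {m ∈ Fintype.piFinset (fun _ : Fin k => Icc (-(N : ℤ)) N) |
    ∑ i, m i = 0 ∧ ∑ i, (m i).toNat ≤ N}

theorem sum_toNat_neg {k : ℕ} {m : Fin k → ℤ} (h : ∑ i, m i = 0) :
    ∑ i, (-m i).toNat = ∑ i, (m i).toNat := by
  have h1 : ∑ i, m i = ∑ i, (((m i).toNat : ℤ) - ((-m i).toNat : ℤ)) :=
    sum_congr rfl fun i _ => by omega
  rw [h, sum_sub_distrib] at h1
  have h2 : ((∑ i, (m i).toNat : ℕ) : ℤ) = ((∑ i, (-m i).toNat : ℕ) : ℤ) := by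
    push_cast
    linarith
  exact_mod_cast h2.symm

theorem mem_zeroSumTuples {k N : ℕ} {m : Fin k → ℤ} :
    m ∈ zeroSumTuples k N ↔ ∑ i, m i = 0 ∧ ∑ i, (m i).toNat ≤ N := by
  rw [zeroSumTuples, mem_filter, and_iff_right_iff_imp]
  rintro ⟨h0, hN⟩
  rw [Fintype.mem_piFinset]
  intro i
  have h1 : (m i).toNat ≤ ∑ i, (m i).toNat :=
    single_le_sum (f := fun i => (m i).toNat) (fun _ _ => Nat.zero_le _) (mem_univ i)
  have h2 : (-m i).toNat ≤ ∑ i, (-m i).toNat :=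
    single_le_sum (f := fun i => (-m i).toNat) (fun _ _ => Nat.zero_le _) (mem_univ i)
  rw [sum_toNat_neg h0] at h2
  rw [mem_Icc]
  omega

/-- Since a zero-sum tuple has `ℓ¹`-norm twice the sum of its positive entries, the bound `D`
on the norm amounts to the bound `⌊D/2⌋` on that sum. -/
theorem KsetT_eq (k D : ℕ) :
    KsetT k D = ↑({m ∈ zeroSumTuples k (D / 2) | Antitone m} : Finset (Fin k → ℤ)) := by
  ext m
  simp only [KsetT, Set.mem_ofPred_eq, coe_filter, mem_zeroSumTuples]
  have habs : ∑ i, |m i| = 2 * ((∑ i, (m i).toNat : ℕ) : ℤ) - ∑ i, m i := by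
    rw [Nat.cast_sum, mul_sum, ← sum_sub_distrib]
    refine sum_congr rfl fun i _ => ?_
    rcases abs_cases (m i) with h | h <;> omega
  constructor
  · rintro ⟨h1, h2, h3⟩
    rw [habs, h2] at h3
    exact ⟨⟨h2, by omega⟩, fun i j h => h1 i j h⟩
  · rintro ⟨⟨h2, h3⟩, h1⟩
    refine ⟨fun i j h => h1 h, h2, ?_⟩
    rw [habs, h2]
    omega

/-- A zero-sum tuple is a positive composition of `n` on the set `P` of its positive places
together with a weak composition of the same `n` on the complement. -/
theorem card_zeroSumTuples (k N : ℕ) :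
    #(zeroSumTuples k N) = ∑ n ∈ range (N + 1), ∑ P : Finset (Fin k),
      #(posComp P n) * #(piAntidiag Pᶜ n) := by
  rw [card_eq_sum_card_fiberwise (t := range (N + 1) ×ˢ (univ : Finset (Finset (Fin k))))
    (f := fun m : Fin k → ℤ => (∑ i, (m i).toNat, ({i | 0 < m i} : Finset (Fin k)))),
    sum_product]
  · refine sum_congr rfl fun n hn => sum_congr rfl fun P _ => ?_
    rw [mem_range] at hn
    rw [← card_product]
    refine card_nbij' (fun m => (fun i => (m i).toNat, fun i => (-m i).toNat))
      (fun p i => (p.1 i : ℤ) - (p.2 i : ℤ)) ?_ ?_ ?_ ?_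
    · intro m hm
      simp only [coe_filter, mem_zeroSumTuples, Prod.mk.injEq, Set.mem_ofPred_eq] at hm
      obtain ⟨⟨h0, hN⟩, hsum, rfl⟩ := hm
      simp only [posComp, coe_product, Set.mem_prod, mem_coe, mem_filter, mem_piAntidiag,
        mem_univ, true_and, mem_compl]
      refine ⟨⟨⟨?_, fun i hi => by omega⟩, fun i hi => by omega⟩, ?_, fun i hi => by omega⟩
      · rw [← hsum]
        refine sum_subset (subset_univ _) fun i _ hi => ?_
        simp only [mem_filter, mem_univ, true_and] at hi
        omega
      · rw [← hsum, ← sum_toNat_neg h0]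
        refine sum_subset (subset_univ _) fun i _ hi => ?_
        simp only [mem_compl, mem_filter, mem_univ, true_and, not_not] at hi
        omega
    · rintro ⟨a, b⟩ hab
      simp only [posComp, coe_product, Set.mem_prod, mem_coe, mem_filter, mem_piAntidiag,
        mem_compl] at hab
      obtain ⟨⟨⟨ha1, ha2⟩, ha3⟩, hb1, hb2⟩ := hab
      have hb0 : ∀ i ∈ P, b i = 0 := fun i hi => by
        by_contra h
        exact hb2 i h hi
      have ha0 : ∀ i, i ∉ P → a i = 0 := fun i hi => by
        by_contra h
        exact hi (ha2 i h)
      have hsa : ∑ i, a i = n := by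
        rw [← ha1]
        exact (sum_subset (subset_univ P) fun i _ hi => ha0 i hi).symm
      have hsb : ∑ i, b i = n := by
        rw [← hb1]
        exact (sum_subset (subset_univ Pᶜ) fun i _ hi => hb0 i (by simpa using hi)).symm
      have htn : ∀ i, ((a i : ℤ) - (b i : ℤ)).toNat = a i := fun i => by
        by_cases hi : i ∈ P
        · have := hb0 i hi
          omega
        · have := ha0 i hi
          omega
      simp only [coe_filter, mem_zeroSumTuples, Prod.mk.injEq, Set.mem_ofPred_eq, htn, hsa]
      refine ⟨⟨?_, by omega⟩, trivial, ?_⟩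
      · rw [sum_sub_distrib, ← Nat.cast_sum, ← Nat.cast_sum, hsa, hsb, sub_self]
      · ext i
        simp only [mem_filter, mem_univ, true_and]
        constructor
        · intro h
          by_contra hi
          have := ha0 i hi
          omega
        · intro hi
          have := ha3 i hi
          have := hb0 i hi
          omega
    · intro m _
      funext i
      simp only
      omega
    · rintro ⟨a, b⟩ hab
      simp only [posComp, coe_product, Set.mem_prod, mem_coe, mem_filter, mem_piAntidiag,
        mem_compl] at hab
      obtain ⟨⟨⟨ha1, ha2⟩, ha3⟩, hb1, hb2⟩ := hab
      have key : ∀ i, a i = 0 ∨ b i = 0 := fun i => by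
        by_contra! h
        exact hb2 i h.2 (ha2 i h.1)
      simp only [Prod.mk.injEq]
      constructor <;> funext i <;> have := key i <;> omega
  · intro m hm
    have := (mem_zeroSumTuples.1 hm).2
    simp only [coe_product, Set.mem_prod, coe_range, Set.mem_Iio, coe_univ, Set.mem_univ, and_true]
    omega

/-- The leading coefficient contributed by one set `P` of positive places among `d + 2`. -/
theorem tendsto_term (d : ℕ) (P : Finset (Fin (d + 2))) :
    Tendsto (fun n : ℕ => ((#(posComp P n) * #(piAntidiag Pᶜ n) : ℕ) : ℝ) / (n : ℝ) ^ d) atTop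
      (𝓝 ((if #P = 0 then 0 else (d.choose (#P - 1) : ℝ)) / d.factorial)) := by
  have hc : #Pᶜ = d + 2 - #P := by rw [card_compl, Fintype.card_fin]
  have hle : #P ≤ d + 2 := by simpa using card_le_univ P
  by_cases h0 : #P = 0
  -- no positive place: nothing is left once `n ≥ 1`
  · rw [if_pos h0, zero_div]
    refine tendsto_const_nhds.congr' ?_
    filter_upwards [eventually_gt_atTop 0] with n hn
    have : posComp P n = ∅ := by
      rw [card_eq_zero] at h0
      subst h0
      simp [posComp, hn.ne']
    simp [this]
  · rw [if_neg h0]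
    by_cases h1 : #P = d + 2
    · rw [Nat.choose_eq_zero_of_lt (by omega), Nat.cast_zero, zero_div]
      refine tendsto_const_nhds.congr' ?_
      filter_upwards [eventually_gt_atTop 0] with n hn
      have h2 : Pᶜ = ∅ := by rw [← card_eq_zero]; omega
      simp [h2, hn.ne']
    · obtain ⟨p, hp⟩ := Nat.exists_eq_succ_of_ne_zero h0
      obtain ⟨q, hq⟩ : ∃ q, d = p + q := ⟨d - p, by omega⟩
      have hA := tendsto_card_posComp P p hp
      have hB := tendsto_card_piAntidiag Pᶜ q (by omega)
      have h := hA.mul hB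
      have hval : (1 / (p.factorial : ℝ)) * (1 / (q.factorial : ℝ)) =
          (d.choose (#P - 1) : ℝ) / d.factorial := by
        rw [hp, hq, Nat.succ_sub_one, Nat.choose_symm_add, Nat.add_choose, Nat.cast_div
          (Nat.factorial_mul_factorial_dvd_factorial_add p q) (by positivity)]
        push_cast
        have : ((p + q).factorial : ℝ) ≠ 0 := by positivity
        field_simp
      rw [hval] at h
      refine h.congr fun n => ?_
      rw [div_mul_div_comm, ← pow_add, ← hq, Nat.cast_mul]

/-- The leading coefficients of `tendsto_term` add up, by Vandermonde, to a central binomial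
coefficient. -/
theorem sum_finset_choose (d : ℕ) :
    ∑ P : Finset (Fin (d + 2)), (if #P = 0 then 0 else d.choose (#P - 1)) =
      (2 * d + 2).choose (d + 1) := by
  rw [← powerset_univ, sum_powerset_apply_card (fun p => if p = 0 then 0 else d.choose (p - 1)),
    card_univ, Fintype.card_fin, sum_range_succ']
  simp only [Nat.add_eq_zero_iff, one_ne_zero, and_false, if_false, if_true, add_zero,
    Nat.add_sub_cancel, smul_eq_mul, mul_zero]
  -- the last term vanishes and the rest is a Vandermonde convolution
  rw [sum_range_succ, Nat.choose_eq_zero_of_lt (show d < d + 1 by omega), mul_zero, add_zero,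
    show 2 * d + 2 = d + (d + 2) by ring, Nat.add_choose_eq d (d + 2),
    Nat.sum_antidiagonal_eq_sum_range_succ_mk, sum_range_succ _ (d + 1),
    Nat.choose_eq_zero_of_lt (show d < d + 1 by omega), zero_mul, add_zero]
  refine sum_congr rfl fun i hi => ?_
  rw [mem_range] at hi
  simp only
  rw [mul_comm, ← Nat.choose_symm (show i + 1 ≤ d + 2 by omega),
    show d + 2 - (i + 1) = d + 1 - i by omega]

theorem tendsto_card_zeroSumTuples (d : ℕ) :
    Tendsto (fun N : ℕ => (#(zeroSumTuples (d + 2) N) : ℝ) / (N : ℝ) ^ (d + 1)) atTop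
      (𝓝 (((2 * d + 2).choose (d + 1) : ℝ) / (d + 1).factorial)) := by
  have h : Tendsto (fun n : ℕ => ((∑ P : Finset (Fin (d + 2)),
      #(posComp P n) * #(piAntidiag Pᶜ n) : ℕ) : ℝ) / (n : ℝ) ^ d) atTop
      (𝓝 (((2 * d + 2).choose (d + 1) : ℝ) / d.factorial)) := by
    have := tendsto_finsetSum (univ : Finset (Finset (Fin (d + 2))))
      (fun P _ => tendsto_term d P)
    rw [← sum_finset_choose]
    push_cast
    simpa only [← sum_div, Nat.cast_mul] using this
  have h2 := tendsto_sum_div_pow _ _ _ h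
  simp only [card_zeroSumTuples]
  rw [Nat.factorial_succ]
  push_cast at h2 ⊢
  convert h2 using 2
  rw [div_div, mul_comm (d.factorial : ℝ)]

theorem tendsto_card_antitone_zeroSumTuples (d : ℕ) :
    Tendsto (fun N : ℕ => (#{m ∈ zeroSumTuples (d + 2) N | Antitone m} : ℝ) / (N : ℝ) ^ (d + 1))
      atTop
      (𝓝 (((2 * d + 2).choose (d + 1) : ℝ) / (d + 1).factorial / (d + 2).factorial)) := by
  refine tendsto_card_antitone (zeroSumTuples (d + 2)) (fun N => (N : ℝ) ^ (d + 1))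
    (fun N => by positivity) ?_ _ (tendsto_card_zeroSumTuples d) ?_
  · intro N f hf σ
    rw [mem_zeroSumTuples] at hf ⊢
    constructor
    · simpa [Equiv.sum_comp σ f] using hf.1
    · simpa [Equiv.sum_comp σ (fun i => (f i).toNat)] using hf.2
  · refine tendsto_zero_of_le_pow _ ((d + 2) ^ 2) 2 d (d + 1) (by omega) fun N => ?_
    have := card_not_injective_le (zeroSumTuples (d + 2) N) (Icc (-(N : ℤ)) N) ?_ 2
      (fun i j => {i, j}) (fun i j hij => card_pair hij) ?_
    · have hI : #(Icc (-(N : ℤ)) N) = 2 * N + 1 := by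
        rw [Int.card_Icc]
        omega
      rwa [hI, Nat.add_sub_cancel] at this
    · intro f hf i
      exact Fintype.mem_piFinset.1 (mem_filter.1 hf).1 i
    -- the common value at `i` and `j` is half the negated sum of the other entries
    · intro i j hij f hf g hg hfij hgij h
      have hf0 := (mem_zeroSumTuples.1 hf).1
      have hg0 := (mem_zeroSumTuples.1 hg).1
      have hrest : ∑ l ∈ ({i, j} : Finset (Fin (d + 2)))ᶜ, f l =
          ∑ l ∈ ({i, j} : Finset (Fin (d + 2)))ᶜ, g l :=
        sum_congr rfl fun l hl => h l (mem_compl.1 hl)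
      rw [← sum_add_sum_compl {i, j}, sum_pair hij] at hf0 hg0
      have hi : f i = g i := by omega
      funext l
      by_cases hl : l ∈ ({i, j} : Finset (Fin (d + 2)))
      · rcases mem_insert.1 hl with rfl | hl
        · exact hi
        · rw [mem_singleton] at hl
          subst hl
          omega
      · exact h l hl

theorem ncard_KsetT (k D : ℕ) :
    (KsetT k D).ncard = #{m ∈ zeroSumTuples k (D / 2) | Antitone m} := by
  rw [KsetT_eq, Set.ncard_coe_finset]

/-- The only zero-sum tuple of length one is `0`. -/
theorem card_antitone_zeroSumTuples_one (N : ℕ) :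
    #{m ∈ zeroSumTuples 1 N | Antitone m} ≤ 1 := by
  rw [card_le_one]
  intro f hf g hg
  have hf0 := (mem_zeroSumTuples.1 (mem_filter.1 hf).1).1
  have hg0 := (mem_zeroSumTuples.1 (mem_filter.1 hg).1).1
  funext i
  rw [Fin.sum_univ_one] at hf0 hg0
  rw [Subsingleton.elim i 0, hf0, hg0]

theorem tendsto_lower_zeroSumTuples (k d : ℕ) (hk : 1 ≤ k) (hkd : k < d + 2) :
    Tendsto (fun N : ℕ => (#{m ∈ zeroSumTuples k N | Antitone m} : ℝ) / (N : ℝ) ^ (d + 1))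
      atTop (𝓝 0) := by
  rcases Nat.lt_or_ge 1 k with h | h
  · obtain ⟨e, rfl⟩ : ∃ e, k = e + 2 := ⟨k - 2, by omega⟩
    exact tendsto_div_pow_zero_of_lt (by omega) (tendsto_card_antitone_zeroSumTuples e)
  · obtain rfl : k = 1 := by omega
    refine tendsto_zero_of_le_pow _ 1 0 0 (d + 1) (by omega) fun N => ?_
    simpa using card_antitone_zeroSumTuples_one N

/-! ### The ratio -/

/-- `auxCount ν D` has leading term `2 N^(ν-1) / (ν-1)!²` in `N = ⌊D/2⌋`: only `k = ν - 1`
contributes. Here `ν = d + 2`. -/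
theorem tendsto_auxCount (d : ℕ) (hd : 1 ≤ d) :
    Tendsto (fun N : ℕ => ((2 * ∑ k ∈ Icc 2 (d + 1), ∑ n ∈ Icc 1 N, partCount k n : ℕ) : ℝ) /
      (N : ℝ) ^ (d + 1)) atTop (𝓝 (2 * (1 / ((d + 1).factorial : ℝ) ^ 2))) := by
  have hlow : Tendsto (fun N : ℕ => ∑ k ∈ Icc 2 d,
      ((∑ n ∈ Icc 1 N, partCount k n : ℕ) : ℝ) / (N : ℝ) ^ (d + 1)) atTop
      (𝓝 (∑ k ∈ Icc 2 d, 0)) := by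
    refine tendsto_finsetSum _ fun k hk => ?_
    rw [mem_Icc] at hk
    exact tendsto_div_pow_zero_of_lt (by omega) (tendsto_sum_partCount k (by omega))
  have h := (hlow.add (tendsto_sum_partCount (d + 1) (by omega))).const_mul 2
  rw [sum_const_zero, zero_add] at h
  refine h.congr fun N => ?_
  rw [sum_Icc_succ_top (by omega), ← sum_div, ← add_div, ← mul_div_assoc]
  push_cast
  rfl

/-- The sets `K_T(k, D)` for `k ≤ ν` together have the leading term of `K_T(ν, D)`, of degree `ν - 1`
in `N = ⌊D/2⌋`. Here `ν = d + 2`. -/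
theorem tendsto_nodeCount (d : ℕ) :
    Tendsto (fun N : ℕ =>
      ((∑ k ∈ Icc 1 (d + 2), #{m ∈ zeroSumTuples k N | Antitone m} : ℕ) : ℝ) /
      (N : ℝ) ^ (d + 1)) atTop
      (𝓝 (((2 * d + 2).choose (d + 1) : ℝ) / (d + 1).factorial / (d + 2).factorial)) := by
  have hlow : Tendsto (fun N : ℕ => ∑ k ∈ Icc 1 (d + 1),
      (#{m ∈ zeroSumTuples k N | Antitone m} : ℝ) / (N : ℝ) ^ (d + 1)) atTop
      (𝓝 (∑ k ∈ Icc 1 (d + 1), 0)) := by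
    refine tendsto_finsetSum _ fun k hk => ?_
    rw [mem_Icc] at hk
    exact tendsto_lower_zeroSumTuples k d hk.1 (by omega)
  have h := hlow.add (tendsto_card_antitone_zeroSumTuples d)
  rw [sum_const_zero, zero_add] at h
  refine h.congr fun N => ?_
  rw [sum_Icc_succ_top (b := d + 1) (by omega), ← sum_div, ← add_div]
  push_cast
  rfl

/-- The leading coefficient of `∑ #K_T` is `C_{d+1} / 2` times that of `auxCount`, where `C_{d+1}` is
the Catalan number. -/
theorem ratio_eq (d : ℕ) :
    2 * (1 / ((d + 1).factorial : ℝ) ^ 2) / (2 * (1 / ((d + 1).factorial : ℝ) ^ 2) +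
      ((2 * d + 2).choose (d + 1) : ℝ) / (d + 1).factorial / (d + 2).factorial) =
    1 / (1 + (1 / (((d + 2 : ℕ) : ℝ) - 1) * ((2 * d + 2).choose d : ℝ)) / 2) := by
  have hch : ((2 * d + 2).choose (d + 1) : ℝ) * (d + 1) = (2 * d + 2).choose d * (d + 2) := by
    have := Nat.choose_succ_right_eq (2 * d + 2) d
    rw [show 2 * d + 2 - d = d + 2 by omega] at this
    exact_mod_cast this
  have hch' : ((2 * d + 2).choose (d + 1) : ℝ) = (2 * d + 2).choose d * (d + 2) / (d + 1) := by
    rw [← hch]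
    field_simp
  rw [hch', Nat.factorial_succ (d + 1)]
  have hf : ((d + 1).factorial : ℝ) ≠ 0 := by positivity
  have hd : ((d : ℝ) + 2) - 1 = d + 1 := by ring
  push_cast
  rw [hd, show (d : ℝ) + 1 + 1 = d + 2 by ring]
  field_simp

end AuxRatio

/-- For fixed `ν ≥ 3`, `A(ν, D) / V(ν, D) → 1 / (1 + C_{ν−1}/2)` as `D → ∞`,
where `C_{ν−1} = (1/(ν−1)) C(2ν−2, ν−2)` is the `(ν−1)`-st Catalan number. -/
theorem auxCount_ratio_limit (ν : ℕ) (hν : 3 ≤ ν) :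
    Filter.Tendsto
      (fun D : ℕ => (auxCount ν D : ℝ) / (totalCount ν D : ℝ))
      Filter.atTop
      (nhds (1 / (1 + (1 / ((ν : ℝ) - 1) * (Nat.choose (2 * ν - 2) (ν - 2))) / 2))) := by
  obtain ⟨d, rfl⟩ : ∃ d, ν = d + 2 := ⟨ν - 2, by omega⟩
  have hd : 1 ≤ d := by omega
  have hA := AuxRatio.tendsto_auxCount d hd
  have hV := hA.add (AuxRatio.tendsto_nodeCount d)
  have hne : 2 * (1 / ((d + 1).factorial : ℝ) ^ 2) +
      ((2 * d + 2).choose (d + 1) : ℝ) / (d + 1).factorial / (d + 2).factorial ≠ 0 := by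
    positivity
  have h := (hA.div hV hne).comp (Nat.tendsto_div_const_atTop (two_ne_zero))
  rw [AuxRatio.ratio_eq] at h
  rw [show 2 * (d + 2) - 2 = 2 * d + 2 by omega, Nat.add_sub_cancel]
  refine h.congr' ?_
  filter_upwards [eventually_ge_atTop 2] with D hD
  have hN : ((D / 2 : ℕ) : ℝ) ≠ 0 := by
    have : 0 < D / 2 := by omega
    positivity
  simp only [Function.comp, Pi.div_apply, ← add_div]
  rw [div_div_div_cancel_right₀ (pow_ne_zero _ hN)]
  simp only [totalCount, auxCount, AuxRatio.ncard_KsetT, Nat.cast_add (R := ℝ)]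
  rfl
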